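/- The subgroup H = ⟨η₁, η₂⟩ of the automorphism group of Γ acts transitively on the arcs of Γ with trivial arc stabilisers; that is, H acts simply transitively (regularly) on the 2m²n arcs of Γ. -/

import Mathlib

/-- The lexicographic product `C_n[mK_1]`: vertices `(i,j)` with `(i₁,j₁) ~ (i₂,j₂)`
iff `i₂ = i₁ + 1` or `i₁ = i₂ + 1` (indices modulo `n`). -/
def lexCycle (n m : ℕ) : SimpleGraph (ZMod n × ZMod m) :=
  SimpleGraph.fromRel (fun u v => v.1 = u.1 + 1)

/-- The representative in `{1, …, n}` of `i` modulo `n`. -/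
def zrep {n : ℕ} (i : ZMod n) : ℕ := if i.val = 0 then n else i.val

/-!
Write `χ(i) = (-1)^i`, which is well defined modulo the even number `n`, and let `r` be reduction
modulo `m`. In the coordinates `(i, 8 j + χ(i))` the parity-dependent term of `η₂` disappears: both
generators become signed affine maps `(i, x) ↦ (a + ε i, ε χ(a) x + α r(i) + β)` with `ε = ±1`.
These maps form a group, and such a map is determined by its effect on a single arc: the first
coordinates give `ε` and `a`, then the second coordinates give `α` and `β`.

For transitivity, `η₂²` is the shift `(i, j) ↦ (i, j + 1 - r(i))`, and conjugating it by `η₁` gives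
`(i, j) ↦ (i, j + r(i))`, so the group contains every shift `(i, j) ↦ (i, j + α r(i) + β)`. With
powers of `η₁` these move each forward arc to `((0, 0), (1, 0))`, and `η₂` exchanges forward and
backward arcs.
-/

open Equiv

section VerticalShift

variable {A R : Type*} [AddCommGroup R]

/-- The permutation `(i, j) ↦ (i, j + f i)` of `A × R`, which moves every fibre of the first
projection by a translation. -/
def verticalShift (f : A → R) : Perm (A × R) :=
  prodShear (Equiv.refl A) fun i => Equiv.addRight (f i)

theorem verticalShift_apply (f : A → R) (v : A × R) : verticalShift f v = (v.1, v.2 + f v.1) := rfl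

theorem verticalShift_zero : verticalShift (0 : A → R) = 1 := by
  ext1 v
  simp [verticalShift_apply]

theorem verticalShift_add (f g : A → R) :
    verticalShift (f + g) = verticalShift f * verticalShift g := by
  ext1 v
  simp [verticalShift_apply, add_left_comm, add_comm]

theorem verticalShift_neg (f : A → R) : verticalShift (-f) = (verticalShift f)⁻¹ := by
  rw [eq_inv_iff_mul_eq_one, ← verticalShift_add, neg_add_cancel, verticalShift_zero]

/-- The additive group of the functions `f` whose vertical shift lies in `H`. -/
def shiftFunctions (H : Subgroup (Perm (A × R))) : AddSubgroup (A → R) where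
  carrier := {f | verticalShift f ∈ H}
  zero_mem' := by
    rw [Set.mem_ofPred_eq, verticalShift_zero]
    exact one_mem H
  add_mem' hf hg := by
    rw [Set.mem_ofPred_eq, verticalShift_add]
    exact mul_mem hf hg
  neg_mem' hf := by
    rw [Set.mem_ofPred_eq, verticalShift_neg]
    exact inv_mem hf

theorem mem_shiftFunctions {H : Subgroup (Perm (A × R))} {f : A → R} :
    f ∈ shiftFunctions H ↔ verticalShift f ∈ H := Iff.rfl

end VerticalShift

theorem units_intCast_mul_self {R : Type*} [Ring R] (ε : ℤˣ) : ((ε : ℤ) : R) * (ε : ℤ) = 1 := by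
  rw [← Int.cast_mul, Int.units_coe_mul_self, Int.cast_one]

section SignCharacter

variable {A : Type*} [Ring A]

theorem signChar_units_mul (χ : AddChar A ℤˣ) (ε : ℤˣ) (a : A) : χ ((ε : ℤ) * a) = χ a := by
  rcases Int.units_eq_one_or ε with rfl | rfl <;> simp [AddChar.map_neg_eq_inv]

theorem signChar_two_sub (χ : AddChar A ℤˣ) (a : A) : χ (2 - a) = χ a := by
  rw [sub_eq_add_neg, ← one_add_one_eq_two, AddChar.map_add_eq_mul, AddChar.map_add_eq_mul,
    Int.units_mul_self, one_mul, AddChar.map_neg_eq_inv, Int.units_inv_eq_self]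

end SignCharacter

section SignedAffine

variable {A R : Type*} [CommRing A] [CommRing R]

/-- The second coordinate `8 j + χ(i)` of the vertex `(i, j)`, in which both generators are affine.
The factor `8` clears the denominators of the correction `j + χ(i) / 8`. -/
def height (χ : AddChar A ℤˣ) (v : A × R) : R := 8 * v.2 + (χ v.1 : ℤ)

theorem eq_of_height_eq (h2 : IsLeftRegular (2 : R)) {χ : AddChar A ℤˣ} {u v : A × R}
    (hfst : u.1 = v.1) (hheight : height χ u = height χ v) : u = v := by
  refine Prod.ext hfst (h2.pow 3 ?_)
  simp only [height, hfst] at hheight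
  linear_combination hheight

/-- The permutation `g` is the signed affine map `(i, x) ↦ (a + ε i, ε χ(a) x + α r(i) + β)` with
respect to the first coordinate `i` and the height `x`. -/
structure IsSignedAffine (r : A →+* R) (χ : AddChar A ℤˣ) (ε : ℤˣ) (a : A) (α β : R)
    (g : Perm (A × R)) : Prop where
  fst_apply : ∀ v, (g v).1 = a + (ε : ℤ) * v.1
  height_apply : ∀ v, height χ (g v) = (ε : ℤ) * (χ a : ℤ) * height χ v + α * r v.1 + β

variable {r : A →+* R} {χ : AddChar A ℤˣ}

theorem IsSignedAffine.one : IsSignedAffine r χ 1 0 0 0 1 where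
  fst_apply := by simp
  height_apply := by simp

theorem IsSignedAffine.mul {ε δ : ℤˣ} {a b : A} {α β γ κ : R} {g h : Perm (A × R)}
    (hg : IsSignedAffine r χ ε a α β g) (hh : IsSignedAffine r χ δ b γ κ h) :
    IsSignedAffine r χ (ε * δ) (a + (ε : ℤ) * b) ((ε : ℤ) * (χ a : ℤ) * γ + α * (δ : ℤ))
      ((ε : ℤ) * (χ a : ℤ) * κ + α * r b + β) (g * h) where
  fst_apply v := by
    rw [Perm.mul_apply, hg.fst_apply, hh.fst_apply]
    push_cast
    ring
  height_apply v := by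
    rw [Perm.mul_apply, hg.height_apply, hh.height_apply, hh.fst_apply, AddChar.map_add_eq_mul,
      signChar_units_mul, map_add, map_mul, map_intCast]
    push_cast
    ring

theorem IsSignedAffine.inv {ε : ℤˣ} {a : A} {α β : R} {g : Perm (A × R)}
    (hg : IsSignedAffine r χ ε a α β g) :
    IsSignedAffine r χ ε ((ε : ℤ) * -a) (-((χ a : ℤ) * α))
      ((χ a : ℤ) * (α * r a - (ε : ℤ) * β)) g⁻¹ := by
  rw [Perm.inv_def]
  have fst_symm (v : A × R) : (g.symm v).1 = (ε : ℤ) * -a + (ε : ℤ) * v.1 := by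
    have hv := hg.fst_apply (g.symm v)
    rw [g.apply_symm_apply] at hv
    linear_combination (-(ε : ℤ) : A) * hv - (g.symm v).1 * units_intCast_mul_self (R := A) ε
  refine ⟨fst_symm, fun v => ?_⟩
  have hv := hg.height_apply (g.symm v)
  rw [g.apply_symm_apply, fst_symm, map_add, map_mul, map_mul, map_neg, map_intCast] at hv
  rw [signChar_units_mul, AddChar.map_neg_eq_inv, Int.units_inv_eq_self, hv]
  have hε := units_intCast_mul_self (R := R) ε
  have hχ := units_intCast_mul_self (R := R) (χ a)
  linear_combination
    -((χ a : ℤ) * (χ a : ℤ) * height χ (g.symm v) + (χ a : ℤ) * α * (r v.1 - r a)) * hε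
      - height χ (g.symm v) * hχ

/-- The group of all signed affine permutations of `A × R`. -/
def signedAffine (r : A →+* R) (χ : AddChar A ℤˣ) : Subgroup (Perm (A × R)) where
  carrier := {g | ∃ ε a α β, IsSignedAffine r χ ε a α β g}
  one_mem' := ⟨_, _, _, _, .one⟩
  mul_mem' := fun ⟨_, _, _, _, hg⟩ ⟨_, _, _, _, hh⟩ => ⟨_, _, _, _, hg.mul hh⟩
  inv_mem' := fun ⟨_, _, _, _, hg⟩ => ⟨_, _, _, _, hg.inv⟩

theorem IsSignedAffine.eq_one (h2 : IsLeftRegular (2 : R)) {g : Perm (A × R)}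
    (hg : IsSignedAffine r χ 1 0 0 0 g) : g = 1 :=
  Equiv.ext fun v =>
    eq_of_height_eq h2 (χ := χ) (by simp [hg.fst_apply]) (by simp [hg.height_apply])

theorem eq_one_of_mem_signedAffine (hA : (2 : A) ≠ 0) (h2 : IsLeftRegular (2 : R))
    {g : Perm (A × R)} (hg : g ∈ signedAffine r χ) {u w : A × R}
    (huw : IsUnit (w.1 - u.1)) (hu : g u = u) (hw : g w = w) : g = 1 := by
  obtain ⟨ε, a, α, β, hg⟩ := hg
  have hu_fst := hg.fst_apply u
  have hw_fst := hg.fst_apply w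
  have hu_height := hg.height_apply u
  have hw_height := hg.height_apply w
  rw [hu] at hu_fst hu_height
  rw [hw] at hw_fst hw_height
  have hε_cast : ((ε : ℤ) : A) = 1 := huw.mul_right_cancel (by linear_combination hu_fst - hw_fst)
  obtain rfl : ε = 1 := (Int.units_eq_one_or ε).resolve_right fun hε => hA <| by
    rw [hε] at hε_cast
    push_cast at hε_cast
    linear_combination -hε_cast
  obtain rfl : a = 0 := by simpa using hu_fst
  rw [AddChar.map_zero_eq_one, Units.val_one, Int.cast_one, one_mul, one_mul] at hu_height hw_height
  obtain rfl : α = 0 := (huw.map r).mul_left_eq_zero.mp <| by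
    rw [map_sub]
    linear_combination hu_height - hw_height
  obtain rfl : β = 0 := by simpa using hu_height
  exact hg.eq_one h2

end SignedAffine

section Generators

variable {A R : Type*} [CommRing A] [CommRing R]

/-- The generator `η₁ : (i, j) ↦ (i + 1, 2 - j)`, over arbitrary rings. -/
def rotationPerm (A R : Type*) [CommRing A] [CommRing R] : Perm (A × R) :=
  prodCongr (Equiv.addRight 1) (Equiv.subLeft 2)

/-- The generator `η₂ : (i, j) ↦ (2 - i, 2 - j + q i)`, over arbitrary rings and with an arbitrary
function `q` in place of `i ↦ ⌊(i - 1) / 2⌋`. -/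
def reflectionPerm (q : A → R) : Perm (A × R) :=
  prodShear (Equiv.subLeft 2) fun i => (Equiv.subLeft 2).trans (Equiv.addRight (q i))

/-- The group `⟨η₁, η₂⟩`. -/
def arcGroup (q : A → R) : Subgroup (Perm (A × R)) :=
  Subgroup.closure {rotationPerm A R, reflectionPerm q}

theorem rotationPerm_apply (v : A × R) : rotationPerm A R v = (v.1 + 1, 2 - v.2) := rfl

theorem reflectionPerm_apply (q : A → R) (v : A × R) :
    reflectionPerm q v = (2 - v.1, 2 - v.2 + q v.1) := rfl

theorem rotationPerm_mem_arcGroup (q : A → R) : rotationPerm A R ∈ arcGroup q :=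
  Subgroup.subset_closure (.inl rfl)

theorem reflectionPerm_mem_arcGroup (q : A → R) : reflectionPerm q ∈ arcGroup q :=
  Subgroup.subset_closure (.inr rfl)

theorem rotationPerm_zpow_apply_fst (k : ℤ) (v : A × R) :
    ((rotationPerm A R ^ k) v).1 = v.1 + k := by
  induction k generalizing v with
  | zero => simp
  | succ k ih =>
    rw [zpow_add_one, Perm.mul_apply, ih, rotationPerm_apply]
    push_cast
    ring
  | pred k ih =>
    have fst_inv : ((rotationPerm A R)⁻¹ v).1 = v.1 + -1 := rfl
    rw [zpow_sub_one, Perm.mul_apply, ih, fst_inv]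
    push_cast
    ring

variable {r : A →+* R} {χ : AddChar A ℤˣ} {q : A → R}

theorem isSignedAffine_rotationPerm (hχ : χ 1 = -1) :
    IsSignedAffine r χ 1 1 0 16 (rotationPerm A R) where
  fst_apply v := by simp [rotationPerm_apply, add_comm]
  height_apply v := by
    simp only [height, rotationPerm_apply, AddChar.map_add_eq_mul, hχ]
    push_cast
    ring

theorem isSignedAffine_reflectionPerm (hq : ∀ i, 4 * q i = 2 * r i - 3 - (χ i : ℤ)) :
    IsSignedAffine r χ (-1) 2 4 10 (reflectionPerm q) where
  fst_apply v := by simp [reflectionPerm_apply, sub_eq_add_neg]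
  height_apply v := by
    have χ_two : χ 2 = 1 := by simpa using signChar_two_sub χ 0
    simp only [height, reflectionPerm_apply, signChar_two_sub, χ_two]
    push_cast
    linear_combination 2 * hq v.1

theorem arcGroup_le_signedAffine (hχ : χ 1 = -1)
    (hq : ∀ i, 4 * q i = 2 * r i - 3 - (χ i : ℤ)) : arcGroup q ≤ signedAffine r χ := by
  rw [arcGroup, Subgroup.closure_le, Set.pair_subset_iff]
  exact ⟨⟨_, _, _, _, isSignedAffine_rotationPerm hχ⟩,
    ⟨_, _, _, _, isSignedAffine_reflectionPerm hq⟩⟩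

theorem reflectionPerm_mul_self (h2 : IsLeftRegular (2 : R))
    (hq : ∀ i, 4 * q i = 2 * r i - 3 - (χ i : ℤ)) :
    reflectionPerm q * reflectionPerm q = verticalShift (1 - ⇑r) := by
  have hq_sub (i : A) : q (2 - i) - q i = 1 - r i := h2.pow 2 <| by
    have hq_reflected := hq (2 - i)
    rw [signChar_two_sub, map_sub, map_ofNat] at hq_reflected
    linear_combination hq_reflected - hq i
  ext1 v
  rw [Perm.mul_apply, reflectionPerm_apply, reflectionPerm_apply, verticalShift_apply]
  refine Prod.ext (sub_sub_cancel 2 v.1) ?_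
  rw [Pi.sub_apply, Pi.one_apply]
  linear_combination hq_sub v.1

theorem rotationPerm_mul_verticalShift (r : A →+* R) :
    rotationPerm A R * verticalShift r = verticalShift (1 - ⇑r) * rotationPerm A R := by
  ext1 v
  simp only [Perm.mul_apply, rotationPerm_apply, verticalShift_apply, Pi.sub_apply, Pi.one_apply,
    map_add, map_one, Prod.mk.injEq, true_and]
  ring

theorem one_sub_mem_shiftFunctions_arcGroup (h2 : IsLeftRegular (2 : R))
    (hq : ∀ i, 4 * q i = 2 * r i - 3 - (χ i : ℤ)) : 1 - ⇑r ∈ shiftFunctions (arcGroup q) := by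
  rw [mem_shiftFunctions, ← reflectionPerm_mul_self h2 hq]
  exact mul_mem (reflectionPerm_mem_arcGroup q) (reflectionPerm_mem_arcGroup q)

theorem coe_mem_shiftFunctions_arcGroup (h2 : IsLeftRegular (2 : R))
    (hq : ∀ i, 4 * q i = 2 * r i - 3 - (χ i : ℤ)) : ⇑r ∈ shiftFunctions (arcGroup q) := by
  rw [mem_shiftFunctions, ← Subgroup.mul_mem_cancel_left _ (rotationPerm_mem_arcGroup q),
    rotationPerm_mul_verticalShift]
  exact mul_mem (one_sub_mem_shiftFunctions_arcGroup h2 hq) (rotationPerm_mem_arcGroup q)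

end Generators

theorem smul_add_smul_one_mem_shiftFunctions_arcGroup {A : Type*} [CommRing A] {m : ℕ}
    (h2 : IsLeftRegular (2 : ZMod m)) {r : A →+* ZMod m} {χ : AddChar A ℤˣ} {q : A → ZMod m}
    (hq : ∀ i, 4 * q i = 2 * r i - 3 - (χ i : ℤ)) (α β : ZMod m) :
    α • ⇑r + β • 1 ∈ shiftFunctions (arcGroup q) := by
  have r_mem := coe_mem_shiftFunctions_arcGroup h2 hq
  have one_mem : 1 ∈ shiftFunctions (arcGroup q) := by
    simpa using add_mem (one_sub_mem_shiftFunctions_arcGroup h2 hq) r_mem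
  exact add_mem (ZMod.smul_mem r_mem α) (ZMod.smul_mem one_mem β)

section Arcs

variable {n m : ℕ}

theorem fst_eq_add_one_or_of_lexCycle_adj {u w : ZMod n × ZMod m} (huw : (lexCycle n m).Adj u w) :
    w.1 = u.1 + 1 ∨ u.1 = w.1 + 1 :=
  ((SimpleGraph.fromRel_adj _ _ _).mp huw).2

theorem isUnit_fst_sub_fst_of_lexCycle_adj {u w : ZMod n × ZMod m}
    (huw : (lexCycle n m).Adj u w) : IsUnit (w.1 - u.1) := by
  rcases fst_eq_add_one_or_of_lexCycle_adj huw with h | h <;> simp [h]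

variable {r : ZMod n →+* ZMod m} {χ : AddChar (ZMod n) ℤˣ} {q : ZMod n → ZMod m}

theorem exists_mem_arcGroup_apply_eq_of_fst_eq_add_one (h2 : IsLeftRegular (2 : ZMod m))
    (hq : ∀ i, 4 * q i = 2 * r i - 3 - (χ i : ℤ)) {u w : ZMod n × ZMod m}
    (huw : w.1 = u.1 + 1) : ∃ g ∈ arcGroup q, g u = (0, 0) ∧ g w = (1, 0) := by
  obtain ⟨k, hk⟩ := ZMod.intCast_surjective (-u.1)
  set ρ := rotationPerm (ZMod n) (ZMod m) ^ k with hρ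
  have hu : (ρ u).1 = 0 := by rw [hρ, rotationPerm_zpow_apply_fst, hk, add_neg_cancel]
  have hw : (ρ w).1 = 1 := by
    rw [hρ, rotationPerm_zpow_apply_fst, hk, huw, add_right_comm, add_neg_cancel, zero_add]
  have shift_mem :=
    smul_add_smul_one_mem_shiftFunctions_arcGroup h2 hq ((ρ u).2 - (ρ w).2) (-(ρ u).2)
  refine ⟨_, mul_mem shift_mem (zpow_mem (rotationPerm_mem_arcGroup q) k), ?_, ?_⟩
  · rw [Perm.mul_apply, ← hρ, verticalShift_apply, hu]
    simp
  · rw [Perm.mul_apply, ← hρ, verticalShift_apply, hw]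
    refine Prod.ext rfl ?_
    simp only [Pi.add_apply, Pi.smul_apply, Pi.one_apply, map_one, smul_eq_mul]
    ring

theorem exists_mem_arcGroup_apply_eq_of_lexCycle_adj (h2 : IsLeftRegular (2 : ZMod m))
    (hq : ∀ i, 4 * q i = 2 * r i - 3 - (χ i : ℤ)) {u w : ZMod n × ZMod m}
    (huw : (lexCycle n m).Adj u w) : ∃ g ∈ arcGroup q, g u = (0, 0) ∧ g w = (1, 0) := by
  rcases fst_eq_add_one_or_of_lexCycle_adj huw with forward | backward
  · exact exists_mem_arcGroup_apply_eq_of_fst_eq_add_one h2 hq forward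
  · have reflected_forward : (reflectionPerm q w).1 = (reflectionPerm q u).1 + 1 := by
      rw [reflectionPerm_apply, reflectionPerm_apply, backward]
      ring
    obtain ⟨g, hg, hgu, hgw⟩ :=
      exists_mem_arcGroup_apply_eq_of_fst_eq_add_one h2 hq reflected_forward
    exact ⟨g * reflectionPerm q, mul_mem hg (reflectionPerm_mem_arcGroup q), hgu, hgw⟩

theorem exists_mem_arcGroup_map_arc (h2 : IsLeftRegular (2 : ZMod m))
    (hq : ∀ i, 4 * q i = 2 * r i - 3 - (χ i : ℤ)) {u₁ w₁ u₂ w₂ : ZMod n × ZMod m}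
    (h₁ : (lexCycle n m).Adj u₁ w₁) (h₂ : (lexCycle n m).Adj u₂ w₂) :
    ∃ g ∈ arcGroup q, g u₁ = u₂ ∧ g w₁ = w₂ := by
  obtain ⟨g₁, hg₁, hu₁, hw₁⟩ := exists_mem_arcGroup_apply_eq_of_lexCycle_adj h2 hq h₁
  obtain ⟨g₂, hg₂, hu₂, hw₂⟩ := exists_mem_arcGroup_apply_eq_of_lexCycle_adj h2 hq h₂
  refine ⟨g₂⁻¹ * g₁, mul_mem (inv_mem hg₂) hg₁, ?_, ?_⟩
  · rw [Perm.mul_apply, Perm.inv_eq_iff_eq, hu₁, hu₂]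
  · rw [Perm.mul_apply, Perm.inv_eq_iff_eq, hw₁, hw₂]

end Arcs

section Representatives

variable {n : ℕ} [NeZero n]

theorem natCast_zrep (i : ZMod n) : (zrep i : ZMod n) = i := by
  rw [zrep]
  split_ifs with hi
  · rw [ZMod.natCast_self, (ZMod.val_eq_zero i).mp hi]
  · exact ZMod.natCast_zmod_val i

theorem zrep_pos (i : ZMod n) : 0 < zrep i := by
  rw [zrep]
  split_ifs with hi
  · exact NeZero.pos n
  · exact Nat.pos_of_ne_zero hi

theorem four_mul_pred_div_two {k : ℕ} (hk : 0 < k) :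
    4 * (((k - 1) / 2 : ℕ) : ℤ) = 2 * k - 3 - (-1) ^ k := by
  rcases Nat.even_or_odd k with hk_even | hk_odd
  · rw [hk_even.neg_one_pow]
    grind
  · rw [hk_odd.neg_one_pow]
    grind

theorem four_mul_zrep_pred_div_two {R : Type*} [Ring R] (r : ZMod n →+* R)
    (hζ : (-1 : ℤˣ) ^ n = 1) (i : ZMod n) :
    4 * (((zrep i - 1) / 2 : ℕ) : R) = 2 * r i - 3 - (AddChar.zmodChar n hζ i : ℤ) := by
  have hr : r i = (zrep i : ℤ) := by
    rw [Int.cast_natCast, ← map_natCast r, natCast_zrep]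
  have hχ : AddChar.zmodChar n hζ i = (-1) ^ zrep i := by
    rw [← AddChar.zmodChar_apply' hζ, natCast_zrep]
  rw [hr, hχ]
  exact_mod_cast congrArg (Int.cast : ℤ → R) (four_mul_pred_div_two (zrep_pos i))

end Representatives

theorem statement19_general {m n : ℕ} (hm : Odd m) (hn : Even n) (hn2 : 2 < n) (hmn : m ∣ n)
    (η₁ η₂ : Equiv.Perm (ZMod n × ZMod m))
    (hη₁ : ∀ (i : ZMod n) (j : ZMod m), η₁ (i, j) = (i + 1, 2 - j))
    (hη₂ : ∀ (i : ZMod n) (j : ZMod m),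
      η₂ (i, j) = (2 - i, 2 - j + (((zrep i - 1) / 2 : ℕ) : ZMod m))) :
    (∀ u₁ w₁ u₂ w₂ : ZMod n × ZMod m,
        (lexCycle n m).Adj u₁ w₁ → (lexCycle n m).Adj u₂ w₂ →
        ∃ g ∈ Subgroup.closure {η₁, η₂}, g u₁ = u₂ ∧ g w₁ = w₂) ∧
      (∀ u w : ZMod n × ZMod m, (lexCycle n m).Adj u w →
        ∀ g ∈ Subgroup.closure {η₁, η₂}, g u = u → g w = w → g = 1) := by
  have : NeZero n := ⟨by omega⟩
  have : Fact (1 < n) := ⟨by omega⟩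
  have two_ne : (2 : ZMod n) ≠ 0 := fun h =>
    Nat.not_dvd_of_pos_of_lt two_pos hn2 ((ZMod.natCast_eq_zero_iff 2 n).mp (mod_cast h))
  have two_regular : IsLeftRegular (2 : ZMod m) :=
    ((ZMod.isUnit_iff_coprime 2 m).mpr hm.coprime_two_left).isRegular.left
  obtain rfl : η₁ = rotationPerm (ZMod n) (ZMod m) := Equiv.ext fun v => hη₁ v.1 v.2
  obtain rfl : η₂ = reflectionPerm fun i => (((zrep i - 1) / 2 : ℕ) : ZMod m) :=
    Equiv.ext fun v => hη₂ v.1 v.2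
  have hq := four_mul_zrep_pred_div_two (ZMod.castHom hmn (ZMod m)) hn.neg_one_pow
  have hχ : AddChar.zmodChar n (hn.neg_one_pow : (-1 : ℤˣ) ^ n = 1) 1 = -1 := by
    rw [AddChar.zmodChar_apply, ZMod.val_one, pow_one]
  exact ⟨fun _ _ _ _ h₁ h₂ => exists_mem_arcGroup_map_arc two_regular hq h₁ h₂,
    fun _ _ huw _ hg hu hw => eq_one_of_mem_signedAffine two_ne two_regular
      (arcGroup_le_signedAffine hχ hq hg) (isUnit_fst_sub_fst_of_lexCycle_adj huw) hu hw⟩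

theorem statement19
    (m s n : ℕ) (hm : 3 ≤ m) (hmo : Odd m) (hs : 0 < s) (hs4 : s % 4 = 2) (hn : n = s * m)
    (η₁ η₂ : Equiv.Perm (ZMod n × ZMod m))
    (hη₁ : ∀ (i : ZMod n) (j : ZMod m), η₁ (i, j) = (i + 1, 2 - j))
    (hη₂ : ∀ (i : ZMod n) (j : ZMod m),
      η₂ (i, j) = (2 - i, 2 - j + (((zrep i - 1) / 2 : ℕ) : ZMod m)))
    :
    (∀ u₁ w₁ u₂ w₂ : ZMod n × ZMod m,
        (lexCycle n m).Adj u₁ w₁ → (lexCycle n m).Adj u₂ w₂ →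
        ∃ g ∈ Subgroup.closure {η₁, η₂}, g u₁ = u₂ ∧ g w₁ = w₂) ∧
      (∀ u w : ZMod n × ZMod m, (lexCycle n m).Adj u w →
        ∀ g ∈ Subgroup.closure {η₁, η₂}, g u = u → g w = w → g = 1) :=
  statement19_general hmo (hn ▸ (Nat.even_iff.mpr (by omega)).mul_right m)
    (by nlinarith [show 2 ≤ s by omega]) (hn ▸ dvd_mul_left m s) η₁ η₂ hη₁ hη₂
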